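/- In a pre-Hilbert left 𝕆-module H, for all u, v ∈ H and p, q ∈ 𝕆 one has ⟨p·u, q·v⟩ = (p·⟨u,v⟩)·conj(q) + [pq, u, v] + ⟨[p,q,v], u⟩, where [p,u,v] := ⟨p·u,v⟩ − p·⟨u,v⟩ is the second associator and [p,q,v] := (pq)·v − p·(q·v) is the left associator. -/

import Mathlib

noncomputable section

/-- The octonions, realized as the Cayley–Dickson double of the quaternions. -/
abbrev 𝕆 : Type := Quaternion ℝ × Quaternion ℝ

/-- Octonion multiplication via the Cayley–Dickson formula
`(a,b)(c,d) = (ac - d̄b, da + bc̄)`. -/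
def omul (x y : 𝕆) : 𝕆 :=
  (x.1 * y.1 - star y.2 * x.2, y.2 * x.1 + x.2 * star y.1)

/-- Octonionic conjugation. -/
def oconj (x : 𝕆) : 𝕆 := (star x.1, -x.2)

/-- The octonion `1`. -/
def oone : 𝕆 := (1, 0)

/-- Real part of an octonion. -/
def ore (x : 𝕆) : ℝ := x.1.re

/-- Embedding of the reals into the octonions. -/
def oreal (r : ℝ) : 𝕆 := ((r : Quaternion ℝ), 0)

/-- Squared norm of an octonion. -/
def onormSq (x : 𝕆) : ℝ := ore (omul x (oconj x))

/-- A pre-Hilbert left `𝕆`-module: a real vector space `H` with an `ℝ`-linear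
left `𝕆`-scalar multiplication `sm` satisfying `1·x = x` and the alternating
left-associator law, together with an `ℝ`-bilinear `𝕆`-valued inner product `inn`
which is `𝕆`-para-linear, hermitian and positive definite. -/
structure PreHilbO (H : Type*) [AddCommGroup H] [Module ℝ H] where
  sm : 𝕆 →ₗ[ℝ] H →ₗ[ℝ] H
  inn : H →ₗ[ℝ] H →ₗ[ℝ] 𝕆
  one_sm : ∀ x : H, sm oone x = x
  alt : ∀ (p q : 𝕆) (x : H),
    sm (omul p q) x - sm p (sm q x) = -(sm (omul q p) x - sm q (sm p x))
  para : ∀ (p : 𝕆) (u v : H), ore (inn (sm p u) v - omul p (inn u v)) = 0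
  herm : ∀ u v : H, inn u v = oconj (inn v u)
  pos : ∀ u : H, ∃ r : ℝ, 0 ≤ r ∧ inn u u = oreal r
  posdef : ∀ u : H, inn u u = 0 → u = 0

/-!
Taking real parts turns the `𝕆`-valued form into a real one, `B(u, v) = Re ⟨u, v⟩`, for which `p`
has adjoint `p̄`, and `x : 𝕆` is determined by the numbers `Re (r x)`. Tested against `r`, the
identity becomes a relation between operators on the module: for
`A(p, q, r) u = ((pq)r)u - p(q(ru))` it says `A(q̄, r, p) = A(p, q, r̄)`.

This is a Clifford relation. Since `p q + q̄ p̄ = 2 Re (pq)` holds both in `𝕆` and for the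
operators, the difference `(pq)r - (q̄r̄)p` equals `2 Re (pq) r - 2 Re (p̄r) q̄` both as an octonion
and as an operator, which is to say that `A(p, q, r) = A(q̄, r̄, p)`.
-/

section Octonion

theorem oconj_oconj (p : 𝕆) : oconj (oconj p) = p := by
  simp only [oconj, star_star, neg_neg]

theorem oconj_add (p q : 𝕆) : oconj (p + q) = oconj p + oconj q := by
  simp only [oconj, Prod.fst_add, Prod.snd_add, star_add, neg_add, Prod.mk_add_mk]

theorem ore_oconj (p : 𝕆) : ore (oconj p) = ore p := by
  simp only [ore, oconj, Quaternion.re_star]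

theorem ore_add (x y : 𝕆) : ore (x + y) = ore x + ore y := rfl

theorem ore_sub (x y : 𝕆) : ore (x - y) = ore x - ore y := rfl

theorem ore_neg (x : 𝕆) : ore (-x) = -ore x := rfl

theorem omul_add (p x y : 𝕆) : omul p (x + y) = omul p x + omul p y := by
  ext1 <;> simp only [omul, Prod.fst_add, Prod.snd_add, star_add] <;> noncomm_ring

theorem omul_sub (p x y : 𝕆) : omul p (x - y) = omul p x - omul p y := by
  ext1 <;> simp only [omul, Prod.fst_sub, Prod.snd_sub, star_sub] <;> noncomm_ring

theorem add_omul (x y p : 𝕆) : omul (x + y) p = omul x p + omul y p := by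
  ext1 <;> simp only [omul, Prod.fst_add, Prod.snd_add] <;> noncomm_ring

theorem sub_omul (x y p : 𝕆) : omul (x - y) p = omul x p - omul y p := by
  ext1 <;> simp only [omul, Prod.fst_sub, Prod.snd_sub] <;> noncomm_ring

theorem smul_omul (c : ℝ) (p q : 𝕆) : omul (c • p) q = c • omul p q := by
  ext1 <;> simp [omul, smul_sub]

theorem oone_omul (p : 𝕆) : omul oone p = p := by
  simp [omul, oone]

theorem oconj_omul (p q : 𝕆) : oconj (omul p q) = omul (oconj q) (oconj p) := by
  ext1 <;> simp [omul, oconj, sub_eq_add_neg, add_comm]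

theorem oconj_eq_smul_oone_sub (p : 𝕆) : oconj p = (2 * ore p) • oone - p := by
  ext1
  · simp [oconj, ore, oone, Quaternion.star_eq_two_re_sub, Algebra.smul_def]
  · simp [oconj, oone]

theorem omul_add_omul_oconj_oconj (p q : 𝕆) :
    omul p q + omul (oconj q) (oconj p) = (2 * ore (omul p q)) • oone := by
  rw [← oconj_omul, oconj_eq_smul_oone_sub, add_sub_cancel]

theorem ore_omul_comm (p q : 𝕆) : ore (omul p q) = ore (omul q p) := by
  simp only [ore, omul, Quaternion.re_sub, Quaternion.re_mul, Quaternion.re_star,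
    Quaternion.imI_star, Quaternion.imJ_star, Quaternion.imK_star]
  ring

theorem ore_omul_assoc (p q r : 𝕆) :
    ore (omul (omul p q) r) = ore (omul p (omul q r)) := by
  simp only [ore, omul, star_add, star_sub, star_mul, star_star, Quaternion.re_add,
    Quaternion.imI_add, Quaternion.imJ_add, Quaternion.imK_add, Quaternion.re_sub,
    Quaternion.imI_sub, Quaternion.imJ_sub, Quaternion.imK_sub, Quaternion.re_mul,
    Quaternion.imI_mul, Quaternion.imJ_mul, Quaternion.imK_mul, Quaternion.re_star,
    Quaternion.imI_star, Quaternion.imJ_star, Quaternion.imK_star]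
  ring

theorem onormSq_eq_normSq_add_normSq (p : 𝕆) :
    onormSq p = Quaternion.normSq p.1 + Quaternion.normSq p.2 := by
  simp [onormSq, omul, oconj, ore, Quaternion.self_mul_star, Quaternion.star_mul_self]

theorem onormSq_eq_zero {p : 𝕆} : onormSq p = 0 ↔ p = 0 := by
  rw [onormSq_eq_normSq_add_normSq, add_eq_zero_iff_of_nonneg Quaternion.normSq_nonneg
    Quaternion.normSq_nonneg, Quaternion.normSq_eq_zero, Quaternion.normSq_eq_zero, Prod.ext_iff,
    Prod.fst_zero, Prod.snd_zero]

theorem onormSq_add (p q : 𝕆) :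
    onormSq (p + q) = onormSq p + onormSq q + 2 * ore (omul (oconj p) q) := by
  have h_cross : ore (omul q (oconj p)) = ore (omul p (oconj q)) := by
    rw [← ore_oconj, oconj_omul, oconj_oconj]
  rw [ore_omul_comm (oconj p)]
  simp only [onormSq, oconj_add, omul_add, add_omul, ore_add, h_cross]
  ring

theorem omul_omul_oconj_self (q p : 𝕆) : omul (omul q (oconj p)) p = onormSq p • q := by
  rw [onormSq_eq_normSq_add_normSq]
  ext1
  · calc
      (q.1 * star p.1 - star (-p.2) * q.2) * p.1 - star p.2 * (-p.2 * q.1 + q.2 * star (star p.1))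
      _ = q.1 * (star p.1 * p.1) + star p.2 * p.2 * q.1 := by
        rw [star_star, star_neg]; noncomm_ring
      _ = (Quaternion.normSq p.1 + Quaternion.normSq p.2) • q.1 := by
        rw [Quaternion.star_mul_self, Quaternion.star_mul_self, Quaternion.mul_coe_eq_smul,
          Quaternion.coe_mul_eq_smul, add_smul]
  · calc
      p.2 * (q.1 * star p.1 - star (-p.2) * q.2) + (-p.2 * q.1 + q.2 * star (star p.1)) * star p.1
      _ = q.2 * (p.1 * star p.1) + p.2 * star p.2 * q.2 := by
        rw [star_star, star_neg]; noncomm_ring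
      _ = (Quaternion.normSq p.1 + Quaternion.normSq p.2) • q.2 := by
        rw [Quaternion.self_mul_star, Quaternion.self_mul_star, Quaternion.mul_coe_eq_smul,
          Quaternion.coe_mul_eq_smul, add_smul]

theorem omul_omul_oconj_add_omul_omul_oconj (q p r : 𝕆) :
    omul (omul q (oconj p)) r + omul (omul q (oconj r)) p = (2 * ore (omul (oconj p) r)) • q := by
  have h_polar := omul_omul_oconj_self q (p + r)
  simp only [onormSq_add, oconj_add, omul_add, add_omul, omul_omul_oconj_self] at h_polar
  linear_combination (norm := module) h_polar

theorem ext_ore_omul {x y : 𝕆} (h : ∀ r, ore (omul r x) = ore (omul r y)) : x = y := by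
  refine sub_eq_zero.mp (onormSq_eq_zero.mp ?_)
  rw [onormSq, ore_omul_comm, omul_sub, ore_sub, h, sub_self]

end Octonion

/-- `sm` is the scalar multiplication of a left `𝕆`-module: it is unital, and its associator
changes sign when the two scalars are exchanged. -/
structure IsOctonionAction {H : Type*} [AddCommGroup H] [Module ℝ H] (sm : 𝕆 →ₗ[ℝ] H →ₗ[ℝ] H) :
    Prop where
  one_sm : ∀ u : H, sm oone u = u
  alt : ∀ (p q : 𝕆) (u : H),
    sm (omul p q) u - sm p (sm q u) = -(sm (omul q p) u - sm q (sm p u))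

/-- `inn` is a hermitian `𝕆`-para-linear form with respect to `sm`: an octonionic inner product
without positivity. -/
structure IsParaHermitian {H : Type*} [AddCommGroup H] [Module ℝ H] (sm : 𝕆 →ₗ[ℝ] H →ₗ[ℝ] H)
    (inn : H →ₗ[ℝ] H →ₗ[ℝ] 𝕆) : Prop where
  para : ∀ (p : 𝕆) (u v : H), ore (inn (sm p u) v - omul p (inn u v)) = 0
  herm : ∀ u v : H, inn u v = oconj (inn v u)

section Module

variable {H : Type*} [AddCommGroup H] [Module ℝ H]

/-- The left associator `[p, q, u] = (pq)u - p(qu)`, as an operator on `u`. -/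
def leftAssociator (sm : 𝕆 →ₗ[ℝ] H →ₗ[ℝ] H) (p q : 𝕆) : H →ₗ[ℝ] H :=
  sm (omul p q) - sm p ∘ₗ sm q

/-- The second associator `[p, u, v] = ⟨pu, v⟩ - p⟨u, v⟩`, which measures the failure of the form to
be `𝕆`-linear in its first argument. -/
def secondAssociator (sm : 𝕆 →ₗ[ℝ] H →ₗ[ℝ] H) (inn : H →ₗ[ℝ] H →ₗ[ℝ] 𝕆) (p : 𝕆) (u v : H) : 𝕆 :=
  inn (sm p u) v - omul p (inn u v)

/-- The operator `A(p, q, r) u = ((pq)r)u - p(q(ru))`, comparing the two extreme bracketings of a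
product of three octonions acting on `u`. -/
def tripleAssociator (sm : 𝕆 →ₗ[ℝ] H →ₗ[ℝ] H) (p q r : 𝕆) : H →ₗ[ℝ] H :=
  sm (omul (omul p q) r) - sm p ∘ₗ sm q ∘ₗ sm r

variable {sm : 𝕆 →ₗ[ℝ] H →ₗ[ℝ] H} {inn : H →ₗ[ℝ] H →ₗ[ℝ] 𝕆}

theorem leftAssociator_apply (p q : 𝕆) (u : H) :
    leftAssociator sm p q u = sm (omul p q) u - sm p (sm q u) := rfl

theorem tripleAssociator_apply (p q r : 𝕆) (u : H) :
    tripleAssociator sm p q r u = sm (omul (omul p q) r) u - sm p (sm q (sm r u)) := rfl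

theorem tripleAssociator_eq_leftAssociator_add (p q r : 𝕆) (u : H) :
    tripleAssociator sm p q r u
      = leftAssociator sm (omul p q) r u + leftAssociator sm p q (sm r u) := by
  simp only [tripleAssociator_apply, leftAssociator_apply, sub_add_sub_cancel]

namespace IsOctonionAction

theorem leftAssociator_swap (hs : IsOctonionAction sm) (p q : 𝕆) (u : H) :
    leftAssociator sm p q u = -leftAssociator sm q p u :=
  hs.alt p q u

theorem sm_oconj (hs : IsOctonionAction sm) (p : 𝕆) (u : H) :
    sm (oconj p) u = (2 * ore p) • u - sm p u := by
  simp only [oconj_eq_smul_oone_sub, map_sub, map_smul, LinearMap.sub_apply, LinearMap.smul_apply,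
    hs.one_sm]

theorem leftAssociator_oconj_left (hs : IsOctonionAction sm) (p q : 𝕆) (u : H) :
    leftAssociator sm (oconj p) q u = -leftAssociator sm p q u := by
  have h_omul : omul (oconj p) q = (2 * ore p) • q - omul p q := by
    rw [oconj_eq_smul_oone_sub, sub_omul, smul_omul, oone_omul]
  rw [leftAssociator_apply, leftAssociator_apply, h_omul, hs.sm_oconj, map_sub, map_smul,
    LinearMap.sub_apply, LinearMap.smul_apply]
  abel

theorem leftAssociator_oconj_oconj (hs : IsOctonionAction sm) (p q : 𝕆) (u : H) :
    leftAssociator sm (oconj q) (oconj p) u = -leftAssociator sm p q u := by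
  rw [hs.leftAssociator_oconj_left, hs.leftAssociator_swap, hs.leftAssociator_oconj_left,
    neg_neg]

theorem sm_sm_add_sm_oconj_sm_oconj (hs : IsOctonionAction sm) (p q : 𝕆) (u : H) :
    sm p (sm q u) + sm (oconj q) (sm (oconj p) u) = (2 * ore (omul p q)) • u := by
  have h_sm : sm (omul p q) u + sm (omul (oconj q) (oconj p)) u = (2 * ore (omul p q)) • u := by
    rw [← LinearMap.add_apply, ← map_add, omul_add_omul_oconj_oconj, map_smul,
      LinearMap.smul_apply, hs.one_sm]
  have h_assoc := hs.leftAssociator_oconj_oconj p q u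
  rw [leftAssociator_apply, leftAssociator_apply] at h_assoc
  linear_combination (norm := module) h_sm - h_assoc

theorem tripleAssociator_eq_oconj_oconj_cyclic (hs : IsOctonionAction sm) (p q r : 𝕆) (u : H) :
    tripleAssociator sm p q r u = tripleAssociator sm (oconj q) (oconj r) p u := by
  have h_scalar : omul (omul p q) r - omul (omul (oconj q) (oconj r)) p
      = (2 * ore (omul p q)) • r - (2 * ore (omul (oconj p) r)) • oconj q := by
    have h_swap := congrArg (omul · r) (omul_add_omul_oconj_oconj p q)
    simp only [add_omul, smul_omul, oone_omul] at h_swap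
    rw [← h_swap, ← omul_omul_oconj_add_omul_omul_oconj (oconj q) p r]
    abel
  have h_operator : sm p (sm q (sm r u)) - sm (oconj q) (sm (oconj r) (sm p u))
      = (2 * ore (omul p q)) • sm r u - (2 * ore (omul (oconj p) r)) • sm (oconj q) u := by
    have h_swap := congrArg (sm (oconj q)) (hs.sm_sm_add_sm_oconj_sm_oconj (oconj p) r u)
    rw [oconj_oconj, map_add, map_smul] at h_swap
    rw [← hs.sm_sm_add_sm_oconj_sm_oconj p q (sm r u), ← h_swap]
    abel
  have h_sm := congrArg (sm · u) h_scalar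
  simp only [map_sub, map_smul, LinearMap.sub_apply, LinearMap.smul_apply] at h_sm
  rw [tripleAssociator_apply, tripleAssociator_apply]
  linear_combination (norm := module) h_sm - h_operator

end IsOctonionAction

namespace IsParaHermitian

theorem ore_inn_comm (hi : IsParaHermitian sm inn) (u v : H) :
    ore (inn u v) = ore (inn v u) := by
  rw [hi.herm, ore_oconj]

theorem ore_omul_inn (hi : IsParaHermitian sm inn) (p : 𝕆) (u v : H) :
    ore (omul p (inn u v)) = ore (inn (sm p u) v) :=
  (sub_eq_zero.mp (hi.para p u v)).symm

theorem ore_inn_sm_right (hi : IsParaHermitian sm inn) (p : 𝕆) (u v : H) :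
    ore (inn u (sm p v)) = ore (inn (sm (oconj p) u) v) := by
  calc ore (inn u (sm p v)) = ore (omul p (inn v u)) := by rw [hi.ore_inn_comm, hi.ore_omul_inn]
    _ = ore (oconj (omul p (inn v u))) := (ore_oconj _).symm
    _ = ore (omul (oconj p) (inn u v)) := by rw [oconj_omul, ← hi.herm, ore_omul_comm]
    _ = ore (inn (sm (oconj p) u) v) := hi.ore_omul_inn _ _ _

theorem ore_inn_leftAssociator_comm (hs : IsOctonionAction sm) (hi : IsParaHermitian sm inn)
    (p q : 𝕆) (u v : H) :
    ore (inn (leftAssociator sm p q v) u) = -ore (inn (leftAssociator sm p q u) v) := by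
  have h_adjoint : ore (inn u (leftAssociator sm p q v))
      = ore (inn (leftAssociator sm (oconj q) (oconj p) u) v) := by
    simp only [leftAssociator_apply, map_sub, LinearMap.sub_apply, ore_sub, hi.ore_inn_sm_right,
      oconj_omul]
  rw [hi.ore_inn_comm, h_adjoint, hs.leftAssociator_oconj_oconj, map_neg, LinearMap.neg_apply,
    ore_neg]

theorem ore_omul_inn_sm_sm (hi : IsParaHermitian sm inn) (p q r : 𝕆) (u v : H) :
    ore (omul r (inn (sm p u) (sm q v))) = ore (inn (sm (oconj q) (sm r (sm p u))) v) := by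
  rw [hi.ore_omul_inn, hi.ore_inn_sm_right]

theorem ore_omul_omul_omul_inn (hi : IsParaHermitian sm inn) (p q r : 𝕆) (u v : H) :
    ore (omul r (omul (omul p (inn u v)) q)) = ore (inn (sm (omul (omul q r) p) u) v) := by
  calc ore (omul r (omul (omul p (inn u v)) q))
    _ = ore (omul (omul q r) (omul p (inn u v))) := by
      rw [← ore_omul_assoc, ore_omul_comm, ← ore_omul_assoc]
    _ = ore (inn (sm (omul (omul q r) p) u) v) := by rw [← ore_omul_assoc, hi.ore_omul_inn]

theorem ore_omul_secondAssociator (hi : IsParaHermitian sm inn) (p r : 𝕆) (u v : H) :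
    ore (omul r (secondAssociator sm inn p u v)) = -ore (inn (leftAssociator sm r p u) v) := by
  simp only [secondAssociator, leftAssociator_apply, omul_sub, ore_sub, ← ore_omul_assoc,
    hi.ore_omul_inn, map_sub, LinearMap.sub_apply, neg_sub]

theorem ore_omul_inn_leftAssociator (hs : IsOctonionAction sm) (hi : IsParaHermitian sm inn)
    (p q r : 𝕆) (u v : H) :
    ore (omul r (inn (leftAssociator sm p q v) u))
      = -ore (inn (leftAssociator sm p q (sm (oconj r) u)) v) := by
  rw [← hi.ore_inn_leftAssociator_comm hs, hi.ore_inn_sm_right, oconj_oconj, hi.ore_omul_inn]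

end IsParaHermitian

theorem stmt_5_general (hs : IsOctonionAction sm) (hi : IsParaHermitian sm inn)
    (p q : 𝕆) (u v : H) :
    inn (sm p u) (sm q v)
      = omul (omul p (inn u v)) (oconj q) + secondAssociator sm inn (omul p q) u v
        + inn (leftAssociator sm p q v) u := by
  refine ext_ore_omul fun r ↦ ?_
  have h_operators : sm (omul (omul (oconj q) r) p) u - sm (oconj q) (sm r (sm p u))
      = leftAssociator sm r (omul p q) u + leftAssociator sm p q (sm (oconj r) u) := by
    calc tripleAssociator sm (oconj q) r p u
      _ = tripleAssociator sm p q (oconj r) u := by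
        rw [hs.tripleAssociator_eq_oconj_oconj_cyclic p, oconj_oconj]
      _ = leftAssociator sm (omul p q) (oconj r) u + leftAssociator sm p q (sm (oconj r) u) :=
        tripleAssociator_eq_leftAssociator_add ..
      _ = leftAssociator sm r (omul p q) u + leftAssociator sm p q (sm (oconj r) u) := by
        rw [hs.leftAssociator_swap, hs.leftAssociator_oconj_left, neg_neg]
  have h_tested := congrArg (fun x ↦ ore (inn x v)) h_operators
  simp only [map_sub, map_add, LinearMap.sub_apply, LinearMap.add_apply, ore_sub, ore_add]
    at h_tested
  rw [omul_add, omul_add, ore_add, ore_add, hi.ore_omul_inn_sm_sm, hi.ore_omul_omul_omul_inn,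
    hi.ore_omul_secondAssociator, hi.ore_omul_inn_leftAssociator hs]
  linarith

end Module

/-- In a pre-Hilbert left octonionic module:
inn (p*u) (q*v) = (p * inn u v)*conj(q) + [pq,u,v] + inn [p,q,v] u. -/
theorem stmt_5 {H : Type*} [AddCommGroup H] [Module ℝ H] (h : PreHilbO H)
    (p q : 𝕆) (u v : H) :
    h.inn (h.sm p u) (h.sm q v)
      = omul (omul p (h.inn u v)) (oconj q)
        + (h.inn (h.sm (omul p q) u) v - omul (omul p q) (h.inn u v))
        + h.inn (h.sm (omul p q) v - h.sm p (h.sm q v)) u := by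
  exact stmt_5_general ⟨h.one_sm, h.alt⟩ ⟨h.para, h.herm⟩ p q u v
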